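/- Let V₀ be a 5-dimensional vector space over ℂ and let W ⊆ ⋀²V₀ be a 2-dimensional subspace containing no nonzero decomposable element (i.e. no nonzero element of the form u∧u' with u, u' ∈ V₀). Then α∧α ≠ 0 in ⋀⁴V₀ for every nonzero α ∈ W, and for any nonzero α, β ∈ W, if α∧α and β∧β are linearly dependent in ⋀⁴V₀ then α and β are linearly dependent; in other words, the map ℙ(W) → ℙ(⋀⁴V₀), [α] ↦ [α∧α], is well defined and injective. -/

import Mathlib

open ExteriorAlgebra

/-!
A bivector `x` induces a skew map `x♯ : V* → V`, `d ↦ d ⌋ x`, and contracting `x ∧ x` with `d` gives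
`2 (x♯ d) ∧ x`. Moreover `v ∧ x = 0` with `v ≠ 0` forces `x = v ∧ w`. Hence `x ∧ x = 0` makes `x`
decomposable.

If `x ∧ x = c (y ∧ y)` with `x` not decomposable and `y ≠ 0`, then `x♯` kills `ker y♯`, so
`range x♯ ≤ range y♯` by skewness. Composing `x♯` with a section of `y♯` gives an endomorphism of
the finite-dimensional space `range y♯`; an eigenvector of it is some `y♯ d ≠ 0` with
`x♯ d = t (y♯ d)`. Contracting `x ∧ x = c (y ∧ y)` with this `d` gives `y♯ d ∧ (t x - c y) = 0`, so
`t x - c y` is decomposable; it vanishes if the span of `x` and `y` has no nonzero decomposables.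
-/

local infixl:70 " ⌋ " => CliffordAlgebra.contractLeft

section Contraction

variable {R M : Type*} [CommRing R] [AddCommGroup M] [Module R M]

theorem ι_mul_ι_swap (m m' : M) : ι R m * ι R m' = -(ι R m' * ι R m) :=
  eq_neg_of_add_eq_zero_left (ι_add_mul_swap m m')

theorem hasFiniteRange_flip_contractLeft [IsNoetherianRing R] {Q : QuadraticForm R M}
    (x : CliffordAlgebra Q) :
    (CliffordAlgebra.contractLeft.flip x : Module.Dual R M →ₗ[R] _).HasFiniteRange := by
  induction x using CliffordAlgebra.left_induction with
  | algebraMap r =>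
    convert LinearMap.HasFiniteRange.zero using 1
    ext d
    simp
  | add x y hx hy =>
    rw [map_add]
    exact hx.add hy
  | ι_mul x m hx =>
    have hrec : (CliffordAlgebra.contractLeft.flip (CliffordAlgebra.ι Q m * x) :
        Module.Dual R M →ₗ[R] _) = LinearMap.toSpanSingleton R _ x ∘ₗ Module.Dual.eval R M m -
          LinearMap.mulLeft R (CliffordAlgebra.ι Q m) ∘ₗ CliffordAlgebra.contractLeft.flip x := by
      ext d
      simp [CliffordAlgebra.contractLeft_ι_mul]
    rw [hrec]
    exact (LinearMap.HasFiniteRange.of_finite_dom.comp_right _).sub (hx.comp_left _)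

theorem contractLeft_mem_exteriorPower (d : Module.Dual R M) {n : ℕ} {x : ExteriorAlgebra R M}
    (hx : x ∈ ⋀[R]^(n + 1) M) : d ⌋ x ∈ ⋀[R]^n M := by
  induction n generalizing x with
  | zero =>
    obtain ⟨m, rfl⟩ : x ∈ LinearMap.range (ι R) := by simpa using hx
    rw [CliffordAlgebra.contractLeft_ι]
    exact Submodule.algebraMap_mem _
  | succ n ih =>
    rw [exteriorPower, pow_succ'] at hx
    induction hx using Submodule.mul_induction_on' with
    | mem_mul_mem v hv y hy =>
      obtain ⟨m, rfl⟩ := hv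
      rw [CliffordAlgebra.contractLeft_ι_mul]
      refine sub_mem (Submodule.smul_mem _ _ hy) ?_
      rw [exteriorPower, pow_succ']
      exact Submodule.mul_mem_mul (LinearMap.mem_range_self _ m) (ih hy)
    | add y _ z _ hy hz =>
      rw [map_add]
      exact add_mem hy hz

theorem mul_ι_of_mem_exteriorPower {n : ℕ} {x : ExteriorAlgebra R M} (hx : x ∈ ⋀[R]^n M) (m : M) :
    x * ι R m = (-1 : R) ^ n • (ι R m * x) := by
  induction hx using Submodule.pow_induction_on_left' with
  | algebraMap r => simp [Algebra.commutes]
  | add x y n _ _ hx hy => rw [add_mul, mul_add, smul_add, hx, hy]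
  | mem_mul v hv n x _ hx =>
    obtain ⟨m', rfl⟩ := hv
    rw [mul_assoc, hx, mul_smul_comm, ← mul_assoc, ι_mul_ι_swap, Nat.succ_eq_add_one, pow_succ,
      neg_mul, mul_assoc (ι R m)]
    module

theorem contractLeft_mul_of_mem_exteriorPower (d : Module.Dual R M) {n : ℕ}
    {x : ExteriorAlgebra R M} (hx : x ∈ ⋀[R]^n M) (y : ExteriorAlgebra R M) :
    d ⌋ (x * y) = (d ⌋ x) * y + (-1 : R) ^ n • (x * (d ⌋ y)) := by
  induction hx using Submodule.pow_induction_on_left' with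
  | algebraMap r => simp [CliffordAlgebra.contractLeft_algebraMap_mul]
  | add x z n _ _ hx hz =>
    rw [add_mul, map_add, hx, hz, map_add, add_mul, add_mul]
    module
  | mem_mul v hv n x _ hx =>
    obtain ⟨m, rfl⟩ := hv
    rw [mul_assoc, CliffordAlgebra.contractLeft_ι_mul, hx, CliffordAlgebra.contractLeft_ι_mul,
      Nat.succ_eq_add_one, pow_succ]
    simp only [mul_add, sub_mul, smul_mul_assoc, mul_smul_comm, mul_assoc]
    module

-- Quantifying over all large finite sets of basis vectors keeps Euler's identity additive in `x`
-- when the basis is infinite.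
theorem eventually_sum_ι_mul_contractLeft {I : Type*} (b : Module.Basis I R M) {n : ℕ}
    {x : ExteriorAlgebra R M} (hx : x ∈ ⋀[R]^n M) :
    ∀ᶠ s : Finset I in Filter.atTop, ∑ i ∈ s, ι R (b i) * (b.coord i ⌋ x) = n • x := by
  induction hx using Submodule.pow_induction_on_left' with
  | algebraMap r => simp
  | add x y n _ _ hx hy =>
    filter_upwards [hx, hy] with s hxs hys
    simp only [map_add, mul_add, Finset.sum_add_distrib, hxs, hys, nsmul_add]
  | mem_mul v hv n x _ hx =>
    obtain ⟨m, rfl⟩ := hv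
    filter_upwards [hx, Filter.eventually_ge_atTop (b.repr m).support] with s hxs hs
    have hm : ∑ i ∈ s, b.repr m i • b i = m := by
      rw [← Finsupp.sum_of_support_subset _ hs (fun i r ↦ r • b i) (by simp),
        ← Finsupp.linearCombination_apply, b.linearCombination_repr]
    have hterm (i : I) : ι R (b i) * (b.coord i ⌋ (ι R m * x)) =
        ι R (b.repr m i • b i) * x + ι R m * (ι R (b i) * (b.coord i ⌋ x)) := by
      rw [CliffordAlgebra.contractLeft_ι_mul, mul_sub, ← mul_assoc, ι_mul_ι_swap (b i) m,
        b.coord_apply, map_smul, mul_smul_comm, smul_mul_assoc, neg_mul, sub_neg_eq_add, mul_assoc]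
    simp only [hterm, Finset.sum_add_distrib, ← Finset.sum_mul, ← Finset.mul_sum, ← map_sum, hm,
      hxs, mul_smul_comm, Nat.succ_eq_add_one, succ_nsmul']

theorem nsmul_eq_zero_of_forall_contractLeft_eq_zero [Module.Free R M] {n : ℕ}
    {x : ExteriorAlgebra R M} (hx : x ∈ ⋀[R]^n M) (h : ∀ d : Module.Dual R M, d ⌋ x = 0) :
    n • x = 0 := by
  obtain ⟨s, hs⟩ := (eventually_sum_ι_mul_contractLeft (Module.Free.chooseBasis R M) hx).exists
  simpa [h] using hs.symm

theorem eq_ι_mul_contractLeft_of_ι_mul_eq_zero {d : Module.Dual R M} {m : M} (hd : d m = 1)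
    {x : ExteriorAlgebra R M} (h : ι R m * x = 0) : x = ι R m * (d ⌋ x) := by
  have hcontr := CliffordAlgebra.contractLeft_ι_mul d m x
  rwa [h, map_zero, hd, one_smul, eq_comm, sub_eq_zero] at hcontr

end Contraction

section BivectorMap

variable {R M : Type*} [CommRing R] [AddCommGroup M] [Module R M]

/-- The map `x♯ : M* → M`, `d ↦ d ⌋ x`, of a bivector `x`, linear also in `x`, turning identities
between bivectors into linear algebra. Composing with the projection `ιInv` makes it defined on the
whole exterior algebra; only its values at `x ∈ ⋀²M` are meaningful. -/
noncomputable def bivectorMap : ExteriorAlgebra R M →ₗ[R] Module.Dual R M →ₗ[R] M :=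
  (CliffordAlgebra.contractLeft.compr₂ ιInv).flip

theorem ι_bivectorMap {x : ExteriorAlgebra R M} (hx : x ∈ ⋀[R]^2 M) (d : Module.Dual R M) :
    ι R (bivectorMap x d) = d ⌋ x := by
  obtain ⟨m, hm⟩ : d ⌋ x ∈ LinearMap.range (ι R) := by
    simpa using contractLeft_mem_exteriorPower d hx
  have hbm : bivectorMap x d = ιInv (d ⌋ x) := rfl
  rw [hbm, ← hm, ι_leftInverse]

theorem bivectorMap_skew {x : ExteriorAlgebra R M} (hx : x ∈ ⋀[R]^2 M) (d e : Module.Dual R M) :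
    d (bivectorMap x e) = -e (bivectorMap x d) := by
  have hcomm := CliffordAlgebra.contractLeft_comm d e x
  rw [← ι_bivectorMap hx, ← ι_bivectorMap hx, CliffordAlgebra.contractLeft_ι,
    CliffordAlgebra.contractLeft_ι, ← map_neg] at hcomm
  exact (algebraMap_leftInverse M).injective hcomm

theorem hasFiniteRange_bivectorMap [IsNoetherianRing R] (x : ExteriorAlgebra R M) :
    (bivectorMap x).HasFiniteRange :=
  (hasFiniteRange_flip_contractLeft x).comp_left ιInv

theorem contractLeft_mul_self {x : ExteriorAlgebra R M} (hx : x ∈ ⋀[R]^2 M)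
    (d : Module.Dual R M) : d ⌋ (x * x) = (2 : R) • (ι R (bivectorMap x d) * x) := by
  rw [contractLeft_mul_of_mem_exteriorPower d hx, ← ι_bivectorMap hx, mul_ι_of_mem_exteriorPower hx]
  module

end BivectorMap

section LinearAlgebra

variable {K U V : Type*} [Field K] [AddCommGroup U] [Module K U] [AddCommGroup V] [Module K V]

theorem range_le_range_of_ker_le_ker_of_skew {f g : Module.Dual K V →ₗ[K] V}
    (hf : ∀ d e : Module.Dual K V, d (f e) = -e (f d))
    (hg : ∀ d e : Module.Dual K V, d (g e) = -e (g d))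
    (hker : LinearMap.ker g ≤ LinearMap.ker f) : LinearMap.range f ≤ LinearMap.range g := by
  rintro _ ⟨e, rfl⟩
  by_contra hfe
  obtain ⟨d, hdfe, hdg⟩ := Submodule.exists_le_ker_of_notMem hfe
  have hgd : g d = 0 := by
    refine (Module.forall_dual_apply_eq_zero_iff K _).mp fun e' ↦ ?_
    rw [hg, neg_eq_zero]
    exact hdg ⟨e', rfl⟩
  have hfd : f d = 0 := hker hgd
  exact hdfe (by rw [hf, hfd, map_zero, neg_zero])

theorem exists_eq_smul_of_range_le_range [IsAlgClosed K] {f g : U →ₗ[K] V}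
    (hfg : LinearMap.range f ≤ LinearMap.range g) (hfin : g.HasFiniteRange) (hg : g ≠ 0) :
    ∃ (u : U) (t : K), g u ≠ 0 ∧ f u = t • g u := by
  have : FiniteDimensional K (LinearMap.range g) := Module.Finite.of_fg hfin
  have : Nontrivial (LinearMap.range g) :=
    Submodule.nontrivial_iff_ne_bot.mpr (LinearMap.range_eq_bot.not.mpr hg)
  obtain ⟨s, hs⟩ := g.rangeRestrict.exists_rightInverse_of_surjective g.range_rangeRestrict
  let T : Module.End K (LinearMap.range g) := Submodule.inclusion hfg ∘ₗ f.rangeRestrict ∘ₗ s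
  obtain ⟨t, ht⟩ := Module.End.exists_eigenvalue T
  obtain ⟨w, hw⟩ := ht.exists_hasEigenvector
  have hgs : g (s w) = w := congrArg Subtype.val (LinearMap.congr_fun hs w)
  refine ⟨s w, t, ?_, ?_⟩
  · rw [hgs]
    exact Subtype.coe_ne_coe.mpr hw.2
  · rw [hgs]
    exact congrArg Subtype.val hw.apply_eq_smul

end LinearAlgebra

section Decomposable

/-- The decomposable bivectors `u ∧ u'`, zero included: the elements excluded from the subspace `W`
of the theorem. -/
def IsDecomposable {R M : Type*} [CommRing R] [AddCommGroup M] [Module R M]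
    (x : ExteriorAlgebra R M) : Prop :=
  ∃ u u' : M, x = ι R u * ι R u'

variable {K V : Type*} [Field K] [AddCommGroup V] [Module K V] {x y : ExteriorAlgebra K V}

theorem isDecomposable_of_ι_mul_eq_zero (hx : x ∈ ⋀[K]^2 V) {v : V} (hv : v ≠ 0)
    (h : ι K v * x = 0) : IsDecomposable x := by
  obtain ⟨d, hd⟩ := Module.Projective.exists_dual_eq_one K hv
  exact ⟨v, bivectorMap x d,
    (eq_ι_mul_contractLeft_of_ι_mul_eq_zero hd h).trans (by rw [ι_bivectorMap hx])⟩

theorem eq_zero_of_bivectorMap_eq_zero [NeZero (2 : K)] (hx : x ∈ ⋀[K]^2 V)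
    (h : bivectorMap x = 0) : x = 0 := by
  have htwo : (2 : ℕ) • x = 0 := nsmul_eq_zero_of_forall_contractLeft_eq_zero hx fun d ↦ by
    rw [← ι_bivectorMap hx, h, LinearMap.zero_apply, map_zero]
  rw [← Nat.cast_smul_eq_nsmul K, Nat.cast_ofNat] at htwo
  exact (smul_eq_zero.mp htwo).resolve_left two_ne_zero

theorem ι_bivectorMap_mul_eq_smul [NeZero (2 : K)] (hx : x ∈ ⋀[K]^2 V) (hy : y ∈ ⋀[K]^2 V)
    {c : K} (h : x * x = c • (y * y)) (d : Module.Dual K V) :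
    ι K (bivectorMap x d) * x = c • (ι K (bivectorMap y d) * y) := by
  have hd := congrArg (d ⌋ ·) h
  simp only [map_smul, contractLeft_mul_self hx, contractLeft_mul_self hy] at hd
  rw [smul_comm] at hd
  exact smul_right_injective _ (two_ne_zero (α := K)) hd

theorem isDecomposable_of_mul_self_eq_zero [NeZero (2 : K)] (hx : x ∈ ⋀[K]^2 V)
    (h : x * x = 0) : IsDecomposable x := by
  by_cases hmap : bivectorMap x = 0
  · exact ⟨0, 0, by simp [eq_zero_of_bivectorMap_eq_zero hx hmap]⟩
  obtain ⟨d, hd⟩ := DFunLike.ne_iff.mp hmap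
  refine isDecomposable_of_ι_mul_eq_zero hx hd ?_
  simpa using ι_bivectorMap_mul_eq_smul hx hx (c := 0) (by simpa using h) d

theorem ker_bivectorMap_le_ker [NeZero (2 : K)] (hx : x ∈ ⋀[K]^2 V) (hy : y ∈ ⋀[K]^2 V)
    {c : K} (h : x * x = c • (y * y)) (hxdec : ¬IsDecomposable x) :
    LinearMap.ker (bivectorMap y) ≤ LinearMap.ker (bivectorMap x) := by
  intro d hd
  by_contra hxd
  refine hxdec (isDecomposable_of_ι_mul_eq_zero hx hxd ?_)
  rw [ι_bivectorMap_mul_eq_smul hx hy h, LinearMap.mem_ker.mp hd, map_zero, zero_mul, smul_zero]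

theorem exists_isDecomposable_smul_sub_smul [IsAlgClosed K] [NeZero (2 : K)]
    (hx : x ∈ ⋀[K]^2 V) (hy : y ∈ ⋀[K]^2 V) {c : K} (h : x * x = c • (y * y))
    (hxdec : ¬IsDecomposable x) (hy0 : y ≠ 0) : ∃ t : K, IsDecomposable (t • x - c • y) := by
  have hrange : LinearMap.range (bivectorMap x) ≤ LinearMap.range (bivectorMap y) :=
    range_le_range_of_ker_le_ker_of_skew (bivectorMap_skew hx) (bivectorMap_skew hy)
      (ker_bivectorMap_le_ker hx hy h hxdec)
  obtain ⟨d, t, hd, htd⟩ := exists_eq_smul_of_range_le_range hrange (hasFiniteRange_bivectorMap y)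
    (mt (eq_zero_of_bivectorMap_eq_zero hy) hy0)
  refine ⟨t, isDecomposable_of_ι_mul_eq_zero
    (sub_mem (Submodule.smul_mem _ t hx) (Submodule.smul_mem _ c hy)) hd ?_⟩
  have hcontr := ι_bivectorMap_mul_eq_smul hx hy h d
  rw [htd, map_smul, smul_mul_assoc] at hcontr
  rw [mul_sub, mul_smul_comm, mul_smul_comm, hcontr, sub_self]

end Decomposable

theorem stmt7_general {K V : Type*} [Field K] [IsAlgClosed K] [NeZero (2 : K)] [AddCommGroup V]
    [Module K V] (W : Submodule K (ExteriorAlgebra K V)) (hW : W ≤ ⋀[K]^2 V)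
    (hdec : ∀ x ∈ W, IsDecomposable x → x = 0) :
    (∀ α ∈ W, α ≠ 0 → α * α ≠ 0) ∧
    (∀ α ∈ W, ∀ β ∈ W, ∀ c : K, α * α = c • (β * β) → ∃ d : K, α = d • β) := by
  have hsq : ∀ α ∈ W, α * α = 0 → α = 0 := fun α hα h ↦
    hdec α hα (isDecomposable_of_mul_self_eq_zero (hW hα) h)
  refine ⟨fun α hα hα0 h ↦ hα0 (hsq α hα h), fun α hα β hβ c h ↦ ?_⟩
  by_cases hα0 : α = 0
  · exact ⟨0, by rw [hα0, zero_smul]⟩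
  have hcβ : c • β ≠ 0 := by
    intro hcβ
    refine hα0 (hsq α hα ?_)
    rw [h, ← smul_mul_assoc, hcβ, zero_mul]
  obtain ⟨t, ht⟩ := exists_isDecomposable_smul_sub_smul (hW hα) (hW hβ) h
    (mt (hdec α hα) hα0) (right_ne_zero_of_smul hcβ)
  have hlin : t • α = c • β :=
    sub_eq_zero.mp (hdec _ (W.sub_mem (W.smul_mem t hα) (W.smul_mem c hβ)) ht)
  have ht0 : t ≠ 0 := left_ne_zero_of_smul (hlin ▸ hcβ)
  exact ⟨t⁻¹ * c, by rw [mul_smul, ← hlin, inv_smul_smul₀ ht0]⟩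

/-- Let `V₀` be 5-dimensional over `ℂ` and `W ⊆ ⋀²V₀` a 2-dimensional
subspace containing no nonzero decomposable element. Then `α∧α ≠ 0` for every nonzero
`α ∈ W`, and for nonzero `α, β ∈ W`, if `α∧α` and `β∧β` are linearly dependent then so
are `α` and `β`; i.e. `ℙ(W) → ℙ(⋀⁴V₀)`, `[α] ↦ [α∧α]` is well defined and injective. -/
theorem stmt7 (V₀ : Type*) [AddCommGroup V₀] [Module ℂ V₀] [FiniteDimensional ℂ V₀]
    (hV₀ : Module.finrank ℂ V₀ = 5)
    (W : Submodule ℂ (ExteriorAlgebra ℂ V₀)) (hW : W ≤ ⋀[ℂ]^2 V₀)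
    (hdim : Module.finrank ℂ W = 2)
    (hdec : ∀ x ∈ W, (∃ u u' : V₀, x = ι ℂ u * ι ℂ u') → x = 0) :
    (∀ α ∈ W, α ≠ 0 → α * α ≠ 0) ∧
    (∀ α ∈ W, ∀ β ∈ W, α ≠ 0 → β ≠ 0 →
      ∀ c : ℂ, α * α = c • (β * β) → ∃ d : ℂ, α = d • β) := by
  obtain ⟨hsq, hinj⟩ := stmt7_general W hW hdec
  exact ⟨hsq, fun α hα β hβ _ _ c hc ↦ hinj α hα β hβ c hc⟩
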